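/- Let S be a densely defined, closed, symmetric operator in a complex Hilbert space H whose deficiency indices n₊(S) = dim ker(S* − i) and n₋(S) = dim ker(S* + i) are both finite. Then for every k ∈ ℕ, k ≥ 1, the power S^{2k} is densely defined, symmetric, and closed, it satisfies ‖S^{2k}f + f‖ ≥ ‖f‖ for all f ∈ dom(S^{2k}), and its deficiency indices are n₊(S^{2k}) = n₋(S^{2k}) = k·(n₊(S) + n₋(S)). -/

import Mathlib

open scoped InnerProductSpace
open Cardinal

noncomputable section

variable {E F G H : Type*}
  [NormedAddCommGroup E] [InnerProductSpace ℂ E] [CompleteSpace E]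
  [NormedAddCommGroup F] [InnerProductSpace ℂ F] [CompleteSpace F]
  [NormedAddCommGroup G] [InnerProductSpace ℂ G] [CompleteSpace G]
  [NormedAddCommGroup H] [InnerProductSpace ℂ H] [CompleteSpace H]

/-- The product (composition) `T₂T₁` of two partially defined linear operators, with domain
`dom(T₂T₁) = {f ∈ dom T₁ | T₁ f ∈ dom T₂}` and value `(T₂T₁) f = T₂ (T₁ f)`. -/
def pcomp {E F G : Type*}
    [NormedAddCommGroup E] [InnerProductSpace ℂ E]
    [NormedAddCommGroup F] [InnerProductSpace ℂ F]
    [NormedAddCommGroup G] [InnerProductSpace ℂ G]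
    (T₂ : F →ₗ.[ℂ] G) (T₁ : E →ₗ.[ℂ] F) : E →ₗ.[ℂ] G where
  domain := (T₂.domain.comap T₁.toFun).map T₁.domain.subtype
  toFun := T₂.toFun ∘ₗ
    (T₁.toFun.restrict (p := T₂.domain.comap T₁.toFun) (q := T₂.domain) fun _ hx => hx) ∘ₗ
    (Submodule.equivMapOfInjective T₁.domain.subtype (Submodule.injective_subtype _)
      (T₂.domain.comap T₁.toFun)).symm.toLinearMap

/-- The identity as a partially defined operator (domain all of `X`). -/
def pid (X : Type*) [NormedAddCommGroup X] [InnerProductSpace ℂ X] : X →ₗ.[ℂ] X :=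
  ⟨⊤, (⊤ : Submodule ℂ X).subtype⟩

/-- Powers of a partially defined operator: `S⁰ = I`, `S¹ = S`, and recursively
`dom(S^m) = {f ∈ dom(S^{m-1}) | S^{m-1} f ∈ dom S}`, `S^m f = S (S^{m-1} f)`. -/
def pmapPow {X : Type*} [NormedAddCommGroup X] [InnerProductSpace ℂ X]
    (S : X →ₗ.[ℂ] X) : ℕ → X →ₗ.[ℂ] X
  | 0 => pid X
  | 1 => S
  | (n + 2) => pcomp S (pmapPow S (n + 1))

/-- The kernel of `A - μ·I` as a submodule of the domain of `A`. -/
def kerAt {X : Type*} [NormedAddCommGroup X] [InnerProductSpace ℂ X]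
    (A : X →ₗ.[ℂ] X) (μ : ℂ) : Submodule ℂ A.domain :=
  LinearMap.ker (A.toFun - μ • A.domain.subtype)

/-- Deficiency index `n₊(S) = dim ker(S* - i·I)`, a Hilbert-space dimension as a cardinal. -/
def nPlus (S : H →ₗ.[ℂ] H) : Cardinal := Module.rank ℂ (kerAt S.adjoint Complex.I)

/-- Deficiency index `n₋(S) = dim ker(S* + i·I)`, a Hilbert-space dimension as a cardinal. -/
def nMinus (S : H →ₗ.[ℂ] H) : Cardinal := Module.rank ℂ (kerAt S.adjoint (-Complex.I))

/-- The symmetry condition `⟪Sf, g⟫ = ⟪f, Sg⟫` for all `f, g` in the domain of `S`. -/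
def IsSymmP {X : Type*} [NormedAddCommGroup X] [InnerProductSpace ℂ X]
    (S : X →ₗ.[ℂ] X) : Prop :=
  ∀ f g : S.domain, ⟪S f, (g : X)⟫_ℂ = ⟪(f : X), S g⟫_ℂ

/-- The defect number of `T` at `0`: `def(T,0) = dim ker(T*)`, as a cardinal. -/
def defect0 (T : E →ₗ.[ℂ] F) : Cardinal := Module.rank ℂ (LinearMap.ker T.adjoint.toFun)

/-- `0` belongs to the field of regularity of `T`: there is `c > 0` with
`‖T f‖ ≥ c ‖f‖` for all `f ∈ dom T`. -/
def ZeroRegular {X Y : Type*} [NormedAddCommGroup X] [InnerProductSpace ℂ X]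
    [NormedAddCommGroup Y] [InnerProductSpace ℂ Y] (T : X →ₗ.[ℂ] Y) : Prop :=
  ∃ c : ℝ, 0 < c ∧ ∀ f : T.domain, c * ‖(f : X)‖ ≤ ‖T f‖

/-- `T` is Fredholm: densely defined, closed, with closed range, and finite-dimensional
kernel and cokernel (= kernel of the adjoint). -/
def IsFredholmP (T : E →ₗ.[ℂ] F) : Prop :=
  Dense (T.domain : Set E) ∧ T.IsClosed ∧
    IsClosed ((LinearMap.range T.toFun : Submodule ℂ F) : Set F) ∧
    Module.rank ℂ (LinearMap.ker T.toFun) < ℵ₀ ∧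
    Module.rank ℂ (LinearMap.ker T.adjoint.toFun) < ℵ₀

/-- `T` is left semi-Fredholm: densely defined, closed, with closed range and
finite-dimensional kernel. -/
def IsLeftSemiFredholmP (T : E →ₗ.[ℂ] F) : Prop :=
  Dense (T.domain : Set E) ∧ T.IsClosed ∧
    IsClosed ((LinearMap.range T.toFun : Submodule ℂ F) : Set F) ∧
    Module.rank ℂ (LinearMap.ker T.toFun) < ℵ₀

/-- The (semi-)Fredholm index `ind(T) = dim ker T - dim ker T*` (as an integer,
via `finrank`). -/
def indP (T : E →ₗ.[ℂ] F) : ℤ :=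
  (Module.finrank ℂ (LinearMap.ker T.toFun) : ℤ) -
    (Module.finrank ℂ (LinearMap.ker T.adjoint.toFun) : ℤ)

/-!
For `ν = ±i` the operator `S^{2k} - ν` is the product of the operators `S - c` over the `2k`-th
roots `c` of `ν`. No root is real, so each factor is bounded below and has closed range, and the
codimensions of the ranges of commuting factors of this kind add up, even when they are infinite.
The codimension of the range of `S - c` is constant on each open half-plane, where it equals
`n₋(S)` or `n₊(S)`, and negation of roots shows that each half-plane contains exactly `k` of them.
-/

section FiniteCodimension

universe u

theorem rank_quotient_map_of_injective {𝕜 : Type*} {V W : Type u} [DivisionRing 𝕜]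
    [AddCommGroup V] [Module 𝕜 V] [AddCommGroup W] [Module 𝕜 W]
    {A : V →ₗ[𝕜] W} (hA : Function.Injective A) (N : Submodule 𝕜 V) :
    Module.rank 𝕜 (W ⧸ N.map A) =
      Module.rank 𝕜 (W ⧸ LinearMap.range A) + Module.rank 𝕜 (V ⧸ N) := by
  set B : V →ₗ[𝕜] W ⧸ N.map A := (N.map A).mkQ ∘ₗ A with hB
  have hker : LinearMap.ker B = N := by
    rw [hB, LinearMap.ker_comp, Submodule.ker_mkQ, Submodule.comap_map_eq_of_injective hA]
  have hrange : LinearMap.range B = (LinearMap.range A).map (N.map A).mkQ :=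
    LinearMap.range_comp _ _
  have hquot := (Submodule.quotientQuotientEquivQuotient _ _
    (LinearMap.map_le_range (f := A) (p := N))).rank_eq
  rw [← Submodule.rank_quotient_add_rank (LinearMap.range B), hrange, hquot, ← hrange,
    ← B.quotKerEquivRange.rank_eq, hker]

section Algebraic

variable {𝕜 V : Type*} [DivisionRing 𝕜] [AddCommGroup V] [Module 𝕜 V] (D K : Submodule 𝕜 V)

theorem rank_quotient_comap_subtype_le :
    Module.rank 𝕜 (D ⧸ K.comap D.subtype) ≤ Module.rank 𝕜 (V ⧸ K) := by
  refine LinearMap.rank_le_of_injective ((K.comap D.subtype).mapQ K D.subtype le_rfl) ?_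
  rw [← LinearMap.ker_eq_bot, Submodule.ker_mapQ, Submodule.mkQ_map_self]

variable {D K} in
theorem rank_quotient_comap_subtype_of_sup_eq_top (h : D ⊔ K = ⊤) :
    Module.rank 𝕜 (D ⧸ K.comap D.subtype) = Module.rank 𝕜 (V ⧸ K) := by
  refine (rank_quotient_comap_subtype_le D K).antisymm <|
    LinearMap.rank_le_of_surjective ((K.comap D.subtype).mapQ K D.subtype le_rfl) ?_
  rw [← LinearMap.range_eq_top, Submodule.range_mapQ, Submodule.range_subtype,
    Submodule.map_mkQ_eq_top, sup_comm, h]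

end Algebraic

section Topological

variable {𝕜 V : Type*} [NontriviallyNormedField 𝕜] [CompleteSpace 𝕜]
  [AddCommGroup V] [Module 𝕜 V] [TopologicalSpace V] [IsTopologicalAddGroup V]
  [ContinuousSMul 𝕜 V] {D K : Submodule 𝕜 V}

theorem sup_eq_top_of_dense_of_finiteDimensional_quotient (hD : Dense (D : Set V))
    (hK : IsClosed (K : Set V)) [FiniteDimensional 𝕜 (V ⧸ K)] : D ⊔ K = ⊤ := by
  have hclosed := Submodule.isClosed_mono_of_finiteDimensional_quotient hK
    (le_sup_right : K ≤ D ⊔ K)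
  have hdense : Dense ((D ⊔ K : Submodule 𝕜 V) : Set V) :=
    hD.mono (SetLike.coe_subset_coe.2 le_sup_left)
  exact SetLike.coe_injective (hclosed.closure_eq ▸ hdense.closure_eq)

/- A linear section `s` of `D → V ⧸ K` is continuous, so `z ↦ z - s (mkQ z)` is a continuous
projection onto `K` that maps `D` into itself. -/
theorem le_topologicalClosure_inf_of_dense (hD : Dense (D : Set V)) (hK : IsClosed (K : Set V))
    [FiniteDimensional 𝕜 (V ⧸ K)] : K ≤ (D ⊓ K).topologicalClosure := by
  have : IsClosed (K : Set V) := hK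
  obtain ⟨s, hs⟩ := (K.mkQ ∘ₗ D.subtype).exists_rightInverse_of_surjective (by
    rw [LinearMap.range_comp, Submodule.range_subtype, Submodule.map_mkQ_eq_top, sup_comm,
      sup_eq_top_of_dense_of_finiteDimensional_quotient hD hK])
  have hs_cont : Continuous (D.subtype ∘ₗ s) := LinearMap.continuous_of_finiteDimensional _
  have hP_cont : Continuous fun z ↦ z - (s (K.mkQ z) : V) :=
    continuous_id.sub (hs_cont.comp K.mkQL.continuous)
  have hP_mem : ∀ z ∈ D, z - (s (K.mkQ z) : V) ∈ D ⊓ K := by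
    refine fun z hz ↦ ⟨sub_mem hz (s _).2, ?_⟩
    have hsz : K.mkQ (s (K.mkQ z) : V) = K.mkQ z := LinearMap.congr_fun hs (K.mkQ z)
    exact (Submodule.Quotient.mk_eq_zero K).1 (by rw [← K.mkQ_apply, map_sub, hsz, sub_self])
  intro x hx
  have hPx : x - (s (K.mkQ x) : V) = x := by
    rw [Submodule.mkQ_apply, (Submodule.Quotient.mk_eq_zero K).2 hx, map_zero,
      ZeroMemClass.coe_zero, sub_zero]
  have hmem := map_mem_closure hP_cont (hD x) hP_mem
  rwa [hPx] at hmem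

end Topological

end FiniteCodimension

/- `B = V₀ A` for a strict contraction `V₀` on the range of `A`; extending `V₀` by zero to the
orthogonal complement turns `A + B` into `(1 + V) A` with `1 + V` invertible. -/
theorem rank_quotient_range_add_of_norm_le {𝕜 V W : Type*} [RCLike 𝕜]
    [AddCommGroup V] [Module 𝕜 V]
    [NormedAddCommGroup W] [InnerProductSpace 𝕜 W] [CompleteSpace W] {A B : V →ₗ[𝕜] W} {r : ℝ}
    (hr : r < 1) (hAB : ∀ x, ‖B x‖ ≤ r * ‖A x‖) (hA : IsClosed (LinearMap.range A : Set W)) :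
    Module.rank 𝕜 (W ⧸ LinearMap.range (A + B)) = Module.rank 𝕜 (W ⧸ LinearMap.range A) := by
  wlog hr0 : 0 ≤ r generalizing r
  · exact this one_half_lt_one (fun x ↦ (hAB x).trans (by nlinarith [norm_nonneg (A x)]))
      one_half_pos.le
  have : CompleteSpace (LinearMap.range A) := hA.completeSpace_coe
  obtain ⟨g, hg⟩ := A.rangeRestrict.exists_rightInverse_of_surjective A.range_rangeRestrict
  have hAg : ∀ y, A (g y) = y := fun y ↦ congrArg Subtype.val (LinearMap.congr_fun hg y)
  let V₀ : LinearMap.range A →L[𝕜] W := (B ∘ₗ g).mkContinuous r fun y ↦ by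
    simpa only [LinearMap.comp_apply, hAg, Submodule.coe_norm] using hAB (g y)
  let U : W →L[𝕜] W := V₀ ∘L (LinearMap.range A).orthogonalProjectionOnto
  have hU_norm : ‖-U‖ < 1 := by
    rw [norm_neg]
    calc ‖U‖ ≤ ‖V₀‖ * ‖(LinearMap.range A).orthogonalProjectionOnto‖ :=
          ContinuousLinearMap.opNorm_comp_le _ _
      _ ≤ r * 1 := mul_le_mul (LinearMap.mkContinuous_norm_le _ hr0 _)
          (Submodule.orthogonalProjectionOnto_norm_le _) (norm_nonneg _) hr0
      _ < 1 := by rwa [mul_one]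
  have hU_apply : ∀ x, U (A x) = B x := by
    intro x
    have hproj : (LinearMap.range A).orthogonalProjectionOnto (A x) = A.rangeRestrict x :=
      Submodule.orthogonalProjectionOnto_mem_subspace_eq_self (A.rangeRestrict x)
    have hzero : ‖B (g (A.rangeRestrict x) - x)‖ ≤ 0 := by
      simpa [hAg] using hAB (g (A.rangeRestrict x) - x)
    rw [norm_le_zero_iff, map_sub, sub_eq_zero] at hzero
    exact (congrArg V₀ hproj).trans hzero
  let e : W ≃L[𝕜] W := ContinuousLinearEquiv.unitsEquiv 𝕜 W (Units.oneSub _ hU_norm)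
  have he : (LinearMap.range A).map e.toLinearEquiv.toLinearMap = LinearMap.range (A + B) := by
    rw [← LinearMap.range_comp]
    congr 1
    ext x
    simp [e, hU_apply]
  exact (Submodule.Quotient.equiv _ _ e.toLinearEquiv he).rank_eq.symm

section Product

variable {X Y Z : Type*}
  [NormedAddCommGroup X] [InnerProductSpace ℂ X]
  [NormedAddCommGroup Y] [InnerProductSpace ℂ Y]
  [NormedAddCommGroup Z] [InnerProductSpace ℂ Z]

theorem mem_graph_pcomp {T₂ : Y →ₗ.[ℂ] Z} {T₁ : X →ₗ.[ℂ] Y} {x : X} {z : Z} :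
    (x, z) ∈ (pcomp T₂ T₁).graph ↔ ∃ y, (x, y) ∈ T₁.graph ∧ (y, z) ∈ T₂.graph := by
  have happly : ∀ (x : T₁.domain) (hx : T₁ x ∈ T₂.domain),
      pcomp T₂ T₁ ⟨x, x, hx, rfl⟩ = T₂ ⟨T₁ x, hx⟩ := by
    intro x hx
    have hsymm : (Submodule.equivMapOfInjective T₁.domain.subtype (Submodule.injective_subtype _)
        (T₂.domain.comap T₁.toFun)).symm ⟨x, x, hx, rfl⟩ = ⟨x, hx⟩ := by
      rw [LinearEquiv.symm_apply_eq]
      rfl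
    exact congrArg (fun w : T₂.domain.comap T₁.toFun ↦ T₂ ⟨T₁ w, w.2⟩) hsymm
  simp only [LinearPMap.mem_graph_iff]
  constructor
  · rintro ⟨⟨_, x, hx, rfl⟩, rfl, rfl⟩
    exact ⟨T₁ x, ⟨x, rfl, rfl⟩, ⟨T₁ x, hx⟩, rfl, (happly x hx).symm⟩
  · rintro ⟨_, ⟨x, rfl, rfl⟩, ⟨_, hx⟩, rfl, rfl⟩
    exact ⟨⟨x, x, hx, rfl⟩, rfl, happly x hx⟩

theorem mem_graph_pid {x y : X} : (x, y) ∈ (pid X).graph ↔ y = x := by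
  simp only [LinearPMap.mem_graph_iff]
  exact ⟨fun ⟨_, hx, hy⟩ ↦ hy.symm.trans hx, fun h ↦ ⟨⟨x, trivial⟩, rfl, h.symm⟩⟩

theorem mem_range_iff_exists_mem_graph {T : X →ₗ.[ℂ] Y} {y : Y} :
    y ∈ LinearMap.range T.toFun ↔ ∃ x, (x, y) ∈ T.graph := by
  rw [← LinearPMap.mem_range_iff]
  rfl

theorem range_pcomp (T₂ : Y →ₗ.[ℂ] Z) (T₁ : X →ₗ.[ℂ] Y) :
    LinearMap.range (pcomp T₂ T₁).toFun =
      ((LinearMap.range T₁.toFun).comap T₂.domain.subtype).map T₂.toFun := by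
  ext z
  simp only [mem_range_iff_exists_mem_graph, mem_graph_pcomp, Submodule.mem_map,
    Submodule.mem_comap]
  constructor
  · rintro ⟨x, y, hxy, hyz⟩
    obtain ⟨y, rfl, rfl⟩ := T₂.mem_graph_iff.1 hyz
    exact ⟨y, ⟨x, hxy⟩, rfl⟩
  · rintro ⟨y, ⟨x, hxy⟩, rfl⟩
    exact ⟨x, y, hxy, T₂.mem_graph y⟩

theorem pcomp_assoc {V : Type*} [NormedAddCommGroup V] [InnerProductSpace ℂ V]
    (T₃ : Z →ₗ.[ℂ] V) (T₂ : Y →ₗ.[ℂ] Z) (T₁ : X →ₗ.[ℂ] Y) :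
    pcomp (pcomp T₃ T₂) T₁ = pcomp T₃ (pcomp T₂ T₁) := by
  apply LinearPMap.eq_of_eq_graph
  ext ⟨x, v⟩
  simp only [mem_graph_pcomp]
  tauto

@[simp]
theorem pcomp_pid (T : X →ₗ.[ℂ] Y) : pcomp T (pid X) = T := by
  apply LinearPMap.eq_of_eq_graph
  ext ⟨x, y⟩
  simp only [mem_graph_pcomp, mem_graph_pid, exists_eq_left]

@[simp]
theorem pid_pcomp (T : X →ₗ.[ℂ] Y) : pcomp (pid Y) T = T := by
  apply LinearPMap.eq_of_eq_graph
  ext ⟨x, y⟩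
  simp only [mem_graph_pcomp, mem_graph_pid, exists_eq_right']

theorem pmapPow_succ (S : X →ₗ.[ℂ] X) : ∀ n, pmapPow S (n + 1) = pcomp S (pmapPow S n)
  | 0 => (pcomp_pid S).symm
  | _ + 1 => rfl

theorem pmapPow_add (S : X →ₗ.[ℂ] X) (m n : ℕ) :
    pmapPow S (m + n) = pcomp (pmapPow S m) (pmapPow S n) := by
  induction m with
  | zero => rw [zero_add, pmapPow, pid_pcomp]
  | succ m ih => rw [Nat.add_right_comm, pmapPow_succ, pmapPow_succ, ih, pcomp_assoc]

theorem domain_pmapPow_anti (S : X →ₗ.[ℂ] X) : Antitone fun n ↦ (pmapPow S n).domain := by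
  refine antitone_nat_of_succ_le fun n x hx ↦ ?_
  obtain ⟨y, hy⟩ := LinearPMap.mem_domain_iff.1 hx
  rw [pmapPow_succ, mem_graph_pcomp] at hy
  obtain ⟨z, hz, -⟩ := hy
  exact LinearPMap.mem_domain_of_mem_graph hz

end Product

section ZeroRegular

variable {X Y Z : Type*}
  [NormedAddCommGroup X] [InnerProductSpace ℂ X]
  [NormedAddCommGroup Y] [InnerProductSpace ℂ Y]
  [NormedAddCommGroup Z] [InnerProductSpace ℂ Z]
  {T : X →ₗ.[ℂ] Y} {T₁ : X →ₗ.[ℂ] Y} {T₂ : Y →ₗ.[ℂ] Z}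

theorem zeroRegular_pid : ZeroRegular (pid X) :=
  ⟨1, one_pos, fun _ ↦ (one_mul _).le⟩

theorem ZeroRegular.exists_norm_le_of_mem_graph (hT : ZeroRegular T) :
    ∃ c : ℝ, 0 < c ∧ ∀ x y, (x, y) ∈ T.graph → c * ‖x‖ ≤ ‖y‖ := by
  obtain ⟨c, hc, hbound⟩ := hT
  refine ⟨c, hc, fun x y hxy ↦ ?_⟩
  obtain ⟨x, rfl, rfl⟩ := T.mem_graph_iff.1 hxy
  exact hbound x

theorem ZeroRegular.injective (hT : ZeroRegular T) : Function.Injective T.toFun := by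
  obtain ⟨c, hc, hbound⟩ := hT
  refine (injective_iff_map_eq_zero T.toFun).2 fun x hx ↦ Subtype.ext (norm_le_zero_iff.1 ?_)
  have hle : c * ‖(x : X)‖ ≤ ‖T.toFun x‖ := hbound x
  rw [hx, norm_zero] at hle
  exact nonpos_of_mul_nonpos_right hle hc

theorem zeroRegular_pcomp (h₂ : ZeroRegular T₂) (h₁ : ZeroRegular T₁) :
    ZeroRegular (pcomp T₂ T₁) := by
  obtain ⟨c₁, hc₁, hbound₁⟩ := h₁.exists_norm_le_of_mem_graph
  obtain ⟨c₂, hc₂, hbound₂⟩ := h₂.exists_norm_le_of_mem_graph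
  refine ⟨c₂ * c₁, mul_pos hc₂ hc₁, fun x ↦ ?_⟩
  obtain ⟨y, hxy, hyz⟩ := mem_graph_pcomp.1 (LinearPMap.mem_graph _ x)
  calc c₂ * c₁ * ‖(x : X)‖ = c₂ * (c₁ * ‖(x : X)‖) := mul_assoc _ _ _
    _ ≤ c₂ * ‖y‖ := mul_le_mul_of_nonneg_left (hbound₁ _ _ hxy) hc₂.le
    _ ≤ ‖pcomp T₂ T₁ x‖ := hbound₂ _ _ hyz

theorem ZeroRegular.cauchySeq_of_mem_graph (hT : ZeroRegular T) {x : ℕ → X} {y : ℕ → Y}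
    (hxy : ∀ n, (x n, y n) ∈ T.graph) (hy : CauchySeq y) : CauchySeq x := by
  obtain ⟨c, hc, hbound⟩ := hT.exists_norm_le_of_mem_graph
  rw [Metric.cauchySeq_iff] at hy ⊢
  intro ε hε
  obtain ⟨N, hN⟩ := hy (c * ε) (mul_pos hc hε)
  refine ⟨N, fun m hm n hn ↦ lt_of_mul_lt_mul_left ?_ hc.le⟩
  have hlt := hN m hm n hn
  rw [dist_eq_norm] at hlt ⊢
  exact (hbound _ _ (sub_mem (hxy m) (hxy n))).trans_lt hlt

theorem ZeroRegular.isClosed_range [CompleteSpace X] (hT : ZeroRegular T) (hcl : T.IsClosed) :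
    IsClosed (LinearMap.range T.toFun : Set Y) := by
  refine IsSeqClosed.isClosed fun y y₀ hy hlim ↦ ?_
  choose x hxy using fun n ↦ mem_range_iff_exists_mem_graph.1 (hy n)
  obtain ⟨x₀, hx₀⟩ :=
    cauchySeq_tendsto_of_complete (hT.cauchySeq_of_mem_graph hxy hlim.cauchySeq)
  exact mem_range_iff_exists_mem_graph.2
    ⟨x₀, hcl.mem_of_tendsto (hx₀.prodMk_nhds hlim) (Filter.Eventually.of_forall hxy)⟩

theorem ZeroRegular.isClosed_pcomp [CompleteSpace Y] (h₂ : ZeroRegular T₂) (hcl₂ : T₂.IsClosed)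
    (hcl₁ : T₁.IsClosed) : (pcomp T₂ T₁).IsClosed := by
  refine IsSeqClosed.isClosed (s := ((pcomp T₂ T₁).graph : Set (X × Z))) ?_
  rintro u ⟨x₀, z₀⟩ hu hlim
  rw [Prod.tendsto_iff] at hlim
  choose y hxy hyz using fun n ↦ mem_graph_pcomp.1 (hu n)
  obtain ⟨y₀, hy₀⟩ :=
    cauchySeq_tendsto_of_complete (h₂.cauchySeq_of_mem_graph hyz hlim.2.cauchySeq)
  exact mem_graph_pcomp.2 ⟨y₀,
    hcl₁.mem_of_tendsto (hlim.1.prodMk_nhds hy₀) (Filter.Eventually.of_forall hxy),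
    hcl₂.mem_of_tendsto (hy₀.prodMk_nhds hlim.2) (Filter.Eventually.of_forall hyz)⟩

theorem isClosed_pid : (pid X).IsClosed := by
  have hgraph : ((pid X).graph : Set (X × X)) = {p | p.2 = p.1} :=
    Set.ext fun _ ↦ mem_graph_pid
  rw [LinearPMap.IsClosed, hgraph]
  exact isClosed_eq continuous_snd continuous_fst

theorem ZeroRegular.dense_domain_pcomp (h₁ : ZeroRegular T₁) (hd₁ : Dense (T₁.domain : Set X))
    (hcl : IsClosed (LinearMap.range T₁.toFun : Set Y))
    [FiniteDimensional ℂ (Y ⧸ LinearMap.range T₁.toFun)] (hd₂ : Dense (T₂.domain : Set Y)) :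
    Dense ((pcomp T₂ T₁).domain : Set X) := by
  obtain ⟨c, hc, hbound⟩ := h₁.exists_norm_le_of_mem_graph
  refine dense_closure.1 (hd₁.mono fun x hx ↦ Metric.mem_closure_iff.2 fun ε hε ↦ ?_)
  have hTx : T₁ ⟨x, hx⟩ ∈ (T₂.domain ⊓ LinearMap.range T₁.toFun).topologicalClosure :=
    le_topologicalClosure_inf_of_dense hd₂ hcl ⟨⟨x, hx⟩, rfl⟩
  obtain ⟨y, ⟨hy, hy_range⟩, hdist⟩ := Metric.mem_closure_iff.1 hTx (c * ε) (mul_pos hc hε)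
  obtain ⟨z, hzy⟩ := mem_range_iff_exists_mem_graph.1 hy_range
  refine ⟨z, LinearPMap.mem_domain_of_mem_graph
    (mem_graph_pcomp.2 ⟨y, hzy, T₂.mem_graph ⟨y, hy⟩⟩), lt_of_mul_lt_mul_left ?_ hc.le⟩
  rw [dist_eq_norm] at hdist ⊢
  exact (hbound _ _ (sub_mem (T₁.mem_graph ⟨x, hx⟩) hzy)).trans_lt hdist

end ZeroRegular

section RangeCodim

universe u

/-- The codimension of the range of `T`. For a densely defined operator with closed range this
is the defect number `dim ker T*`, but unlike the latter it is meaningful for every domain. -/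
def rangeCodim {X Y : Type*} [NormedAddCommGroup X] [InnerProductSpace ℂ X]
    [NormedAddCommGroup Y] [InnerProductSpace ℂ Y] (T : X →ₗ.[ℂ] Y) : Cardinal :=
  Module.rank ℂ (Y ⧸ LinearMap.range T.toFun)

theorem rangeCodim_pid {X : Type*} [NormedAddCommGroup X] [InnerProductSpace ℂ X] :
    rangeCodim (pid X) = 0 := by
  have hrange : LinearMap.range (pid X).toFun = ⊤ :=
    eq_top_iff.2 fun x _ ↦ ⟨⟨x, trivial⟩, rfl⟩
  rw [rangeCodim, hrange, rank_subsingleton']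

variable {X : Type*} {Y Z : Type u}
  [NormedAddCommGroup X] [InnerProductSpace ℂ X]
  [NormedAddCommGroup Y] [InnerProductSpace ℂ Y]
  [NormedAddCommGroup Z] [InnerProductSpace ℂ Z]
  {T₁ : X →ₗ.[ℂ] Y} {T₂ : Y →ₗ.[ℂ] Z}

theorem rangeCodim_pcomp (h₂ : Function.Injective T₂.toFun) :
    rangeCodim (pcomp T₂ T₁) = rangeCodim T₂ +
      Module.rank ℂ (T₂.domain ⧸ (LinearMap.range T₁.toFun).comap T₂.domain.subtype) := by
  rw [rangeCodim, range_pcomp, rank_quotient_map_of_injective h₂, rangeCodim]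

theorem rangeCodim_le_rangeCodim_pcomp (h₂ : Function.Injective T₂.toFun) :
    rangeCodim T₂ ≤ rangeCodim (pcomp T₂ T₁) :=
  le_self_add.trans_eq (rangeCodim_pcomp h₂).symm

theorem rangeCodim_pcomp_le (h₂ : Function.Injective T₂.toFun) :
    rangeCodim (pcomp T₂ T₁) ≤ rangeCodim T₂ + rangeCodim T₁ :=
  (rangeCodim_pcomp h₂).trans_le (by gcongr; exact rank_quotient_comap_subtype_le _ _)

theorem rangeCodim_pcomp_of_finite (h₂ : Function.Injective T₂.toFun)
    (hd₂ : Dense (T₂.domain : Set Y)) (hcl : IsClosed (LinearMap.range T₁.toFun : Set Y))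
    (hfin : rangeCodim T₁ < ℵ₀) :
    rangeCodim (pcomp T₂ T₁) = rangeCodim T₂ + rangeCodim T₁ := by
  have : FiniteDimensional ℂ (Y ⧸ LinearMap.range T₁.toFun) := Module.rank_lt_aleph0_iff.1 hfin
  rw [rangeCodim_pcomp h₂, rank_quotient_comap_subtype_of_sup_eq_top
    (sup_eq_top_of_dense_of_finiteDimensional_quotient hd₂ hcl), rangeCodim, rangeCodim]

theorem rangeCodim_pcomp_of_comm {X : Type*} [NormedAddCommGroup X] [InnerProductSpace ℂ X]
    {T₁ T₂ : X →ₗ.[ℂ] X} (h₁ : Function.Injective T₁.toFun) (h₂ : Function.Injective T₂.toFun)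
    (hcomm : pcomp T₂ T₁ = pcomp T₁ T₂) (hd₂ : Dense (T₂.domain : Set X))
    (hcl : IsClosed (LinearMap.range T₁.toFun : Set X)) :
    rangeCodim (pcomp T₂ T₁) = rangeCodim T₂ + rangeCodim T₁ := by
  rcases lt_or_ge (rangeCodim T₁) ℵ₀ with hfin | hinf
  · exact rangeCodim_pcomp_of_finite h₂ hd₂ hcl hfin
  · have hle₁ : rangeCodim T₁ ≤ rangeCodim (pcomp T₂ T₁) :=
      hcomm ▸ rangeCodim_le_rangeCodim_pcomp h₁
    exact (rangeCodim_pcomp_le h₂).antisymm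
      (Cardinal.add_le_of_le (hinf.trans hle₁) (rangeCodim_le_rangeCodim_pcomp h₂) hle₁)

end RangeCodim

section Shift

variable {X : Type*} [NormedAddCommGroup X] [InnerProductSpace ℂ X]

/-- The operator `S - c·I` on the domain of `S`. -/
def pshift (S : X →ₗ.[ℂ] X) (c : ℂ) : X →ₗ.[ℂ] X :=
  ⟨S.domain, S.toFun - c • S.domain.subtype⟩

variable {S : X →ₗ.[ℂ] X}

theorem mem_graph_pshift {c : ℂ} {x y : X} :
    (x, y) ∈ (pshift S c).graph ↔ (x, y + c • x) ∈ S.graph := by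
  simp only [LinearPMap.mem_graph_iff]
  constructor
  · rintro ⟨x, rfl, rfl⟩
    exact ⟨x, rfl, (sub_add_cancel (S x) (c • (x : X))).symm⟩
  · rintro ⟨x, rfl, hx⟩
    exact ⟨x, rfl, sub_eq_of_eq_add hx⟩

theorem isClosed_pshift_iff {c : ℂ} : (pshift S c).IsClosed ↔ S.IsClosed := by
  have hpre (A : X →ₗ.[ℂ] X) (a : ℂ) (hA : A.IsClosed) : (pshift A a).IsClosed := by
    have hgraph : ((pshift A a).graph : Set (X × X)) =
        (fun p : X × X ↦ (p.1, p.2 + a • p.1)) ⁻¹' A.graph :=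
      Set.ext fun _ ↦ mem_graph_pshift
    rw [LinearPMap.IsClosed, hgraph]
    exact IsClosed.preimage (by fun_prop) hA
  have hinv : pshift (pshift S c) (-c) = S := by
    apply LinearPMap.eq_of_eq_graph
    ext ⟨x, y⟩
    rw [mem_graph_pshift, mem_graph_pshift, neg_smul, neg_add_cancel_right]
  exact ⟨fun h ↦ hinv ▸ hpre _ (-c) h, hpre S c⟩

end Shift

section Symmetric

variable {X : Type*} [NormedAddCommGroup X] [InnerProductSpace ℂ X] {S T : X →ₗ.[ℂ] X}

theorem IsSymmP.inner_eq_of_mem_graph (hS : IsSymmP S) {x y x' y' : X}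
    (h : (x, y) ∈ S.graph) (h' : (x', y') ∈ S.graph) : ⟪y, x'⟫_ℂ = ⟪x, y'⟫_ℂ := by
  obtain ⟨x, rfl, rfl⟩ := S.mem_graph_iff.1 h
  obtain ⟨x', rfl, rfl⟩ := S.mem_graph_iff.1 h'
  exact hS x x'

theorem isSymmP_pcomp (hS : IsSymmP S) (hT : IsSymmP T) (hcomm : pcomp S T = pcomp T S) :
    IsSymmP (pcomp S T) := by
  intro f g
  obtain ⟨u, hu, hu'⟩ := mem_graph_pcomp.1 (LinearPMap.mem_graph _ f)
  have hg : ((g : X), pcomp S T g) ∈ (pcomp T S).graph :=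
    hcomm ▸ LinearPMap.mem_graph _ g
  obtain ⟨v, hv, hv'⟩ := mem_graph_pcomp.1 hg
  exact (hS.inner_eq_of_mem_graph hu' hv).trans (hT.inner_eq_of_mem_graph hu hv')

theorem isSymmP_pmapPow (hS : IsSymmP S) : ∀ n, IsSymmP (pmapPow S n)
  | 0 => fun _ _ ↦ rfl
  | n + 1 => by
    have hcomm : pcomp S (pmapPow S n) = pcomp (pmapPow S n) S := by
      rw [← pmapPow_succ, pmapPow_add, pmapPow]
    rw [pmapPow_succ]
    exact isSymmP_pcomp hS (isSymmP_pmapPow hS n) hcomm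

theorem IsSymmP.norm_le_norm_pmapPow_two_mul_add (hS : IsSymmP S) (k : ℕ)
    (f : (pmapPow S (2 * k)).domain) :
    ‖(f : X)‖ ≤ ‖pmapPow S (2 * k) f + (f : X)‖ := by
  have hf : ((f : X), pmapPow S (2 * k) f) ∈
      (pcomp (pmapPow S k) (pmapPow S k)).graph := by
    rw [← pmapPow_add, ← two_mul]
    exact LinearPMap.mem_graph _ f
  obtain ⟨g, hfg, hg⟩ := mem_graph_pcomp.1 hf
  have hinner : RCLike.re ⟪pmapPow S (2 * k) f, (f : X)⟫_ℂ = ‖g‖ ^ 2 := by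
    rw [(isSymmP_pmapPow hS k).inner_eq_of_mem_graph hg hfg, inner_self_eq_norm_sq]
  refine le_of_sq_le_sq ?_ (norm_nonneg _)
  rw [norm_add_sq (𝕜 := ℂ), hinner]
  nlinarith [sq_nonneg ‖pmapPow S (2 * k) f‖, sq_nonneg ‖g‖]

theorem IsSymmP.norm_pshift_sq (hS : IsSymmP S) (c : ℂ) (x : S.domain) :
    ‖pshift S c x‖ ^ 2 = ‖S x - (c.re : ℂ) • (x : X)‖ ^ 2 + c.im ^ 2 * ‖(x : X)‖ ^ 2 := by
  set u := S x - (c.re : ℂ) • (x : X) with hu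
  have hreal : (⟪u, (x : X)⟫_ℂ).im = 0 := by
    rw [← Complex.conj_eq_iff_im, inner_conj_symm, hu, inner_sub_left, inner_sub_right, hS,
      inner_smul_left, inner_smul_right, Complex.conj_ofReal]
  have hshift : pshift S c x = u - (c.im * Complex.I) • (x : X) := by
    change S x - c • (x : X) = _
    rw [hu, sub_sub, ← add_smul, Complex.re_add_im]
  rw [hshift, norm_sub_sq (𝕜 := ℂ), inner_smul_right, norm_smul, mul_pow]
  simp [hreal]

theorem IsSymmP.norm_pshift_conj (hS : IsSymmP S) (c : ℂ) (x : S.domain) :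
    ‖pshift S (starRingEnd ℂ c) x‖ = ‖pshift S c x‖ := by
  rw [← sq_eq_sq₀ (norm_nonneg _) (norm_nonneg _), hS.norm_pshift_sq, hS.norm_pshift_sq,
    Complex.conj_re, Complex.conj_im, neg_sq]

theorem IsSymmP.zeroRegular_pshift (hS : IsSymmP S) {c : ℂ} (hc : c.im ≠ 0) :
    ZeroRegular (pshift S c) := by
  refine ⟨|c.im|, abs_pos.2 hc, fun x ↦ le_of_sq_le_sq ?_ (norm_nonneg _)⟩
  rw [mul_pow, sq_abs]
  exact (hS.norm_pshift_sq c x).symm ▸ le_add_of_nonneg_left (sq_nonneg _)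

variable [CompleteSpace X]

theorem IsSymmP.isClosed_range_pshift (hS : IsSymmP S) (hcl : S.IsClosed) {c : ℂ}
    (hc : c.im ≠ 0) : IsClosed (LinearMap.range (pshift S c).toFun : Set X) :=
  (hS.zeroRegular_pshift hc).isClosed_range (isClosed_pshift_iff.2 hcl)

/- With `c' = conj c`, `S - d` is a combination of `S - c` and `S - c'`, which have equal norms on
every vector; the first coefficient dominates because `d` is closer to `c` than to `c'`. -/
theorem IsSymmP.rangeCodim_pshift_eq (hS : IsSymmP S) (hcl : S.IsClosed) {c d : ℂ}
    (hcd : 0 < c.im * d.im) : rangeCodim (pshift S d) = rangeCodim (pshift S c) := by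
  have hc : c.im ≠ 0 := left_ne_zero_of_mul hcd.ne'
  set c' := starRingEnd ℂ c with hc'
  have hlt : ‖c - d‖ < ‖d - c'‖ := by
    refine lt_of_pow_lt_pow_left₀ 2 (norm_nonneg _) ?_
    simp only [← Complex.normSq_eq_norm_sq, Complex.normSq_apply, hc', Complex.sub_re,
      Complex.sub_im, Complex.conj_re, Complex.conj_im]
    nlinarith
  have hpos : 0 < ‖d - c'‖ := (norm_nonneg _).trans_lt hlt
  have hcc' : c - c' ≠ 0 := by
    rw [sub_ne_zero, ne_comm]
    exact fun h ↦ hc (Complex.conj_eq_iff_im.1 h)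
  let A (a : ℂ) : S.domain →ₗ[ℂ] X := (pshift S a).toFun
  have hcomb : (d - c') • A c + (c - d) • A c' = (c - c') • A d := by
    change (d - c') • (S.toFun - c • S.domain.subtype) +
      (c - d) • (S.toFun - c' • S.domain.subtype) = (c - c') • (S.toFun - d • S.domain.subtype)
    module
  have hrange : LinearMap.range ((d - c') • A c) = LinearMap.range (A c) :=
    LinearMap.range_smul _ _ (norm_pos_iff.1 hpos)
  have hbound : ∀ x, ‖((c - d) • A c') x‖ ≤ ‖c - d‖ / ‖d - c'‖ * ‖((d - c') • A c) x‖ := by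
    intro x
    have hconj : ‖A c' x‖ = ‖A c x‖ := hS.norm_pshift_conj c x
    rw [LinearMap.smul_apply, LinearMap.smul_apply, norm_smul, norm_smul, hconj, ← mul_assoc,
      div_mul_cancel₀ _ hpos.ne']
  have hrank := rank_quotient_range_add_of_norm_le ((div_lt_one hpos).2 hlt) hbound
    (hrange ▸ hS.isClosed_range_pshift hcl hc)
  rwa [hcomb, hrange, LinearMap.range_smul _ _ hcc'] at hrank

end Symmetric

section Roots

open Polynomial

theorem card_nthRoots_of_isAlgClosed {𝕜 : Type*} [Field 𝕜] [IsAlgClosed 𝕜] (n : ℕ) (a : 𝕜) :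
    (nthRoots n a).card = n := by
  rw [nthRoots, ← (IsAlgClosed.splits _).natDegree_eq_card_roots, natDegree_X_pow_sub_C]

theorem im_ne_zero_of_mem_nthRoots {n : ℕ} {c ν : ℂ} (hν : ν.im ≠ 0)
    (hc : c ∈ nthRoots n ν) : c.im ≠ 0 := by
  have hn : 0 < n := Nat.pos_of_ne_zero fun h ↦ by
    simp only [h, nthRoots_zero, Multiset.notMem_zero] at hc
  rw [mem_nthRoots hn] at hc
  intro hreal
  obtain ⟨r, rfl⟩ := Complex.conj_eq_iff_real.1 (Complex.conj_eq_iff_im.2 hreal)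
  exact hν (by rw [← hc, ← Complex.ofReal_pow, Complex.ofReal_im])

theorem sum_map_nthRoots_two_mul {M : Type*} [AddCommMonoid M] {f : ℂ → M} {a b : M}
    (ha : ∀ c : ℂ, 0 < c.im → f c = a) (hb : ∀ c : ℂ, c.im < 0 → f c = b) {k : ℕ} (hk : k ≠ 0)
    {ν : ℂ} (hν : ν.im ≠ 0) : ((nthRoots (2 * k) ν).map f).sum = k • (a + b) := by
  classical
  set s := nthRoots (2 * k) ν with hs
  have hn : 2 * k ≠ 0 := mul_ne_zero two_ne_zero hk
  have hnodup : s.Nodup :=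
    (Complex.isPrimitiveRoot_exp _ hn).nthRoots_nodup fun h ↦ hν (by rw [h, Complex.zero_im])
  have hneg : s.map Neg.neg = s := by
    rw [Multiset.Nodup.ext (hnodup.map neg_injective) hnodup]
    intro c
    simp only [Multiset.mem_map, neg_eq_iff_eq_neg, exists_eq_right, hs,
      mem_nthRoots (Nat.pos_of_ne_zero hn), (even_two_mul k).neg_pow]
  have hlower : ∀ c ∈ s.filter (¬ 0 < ·.im), c.im < 0 := by
    intro c hc
    rw [Multiset.mem_filter, not_lt] at hc
    exact hc.2.lt_of_ne (im_ne_zero_of_mem_nthRoots hν hc.1)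
  have hcard_eq : (s.filter (0 < ·.im)).card = (s.filter (¬ 0 < ·.im)).card := by
    conv_lhs => rw [← hneg, Multiset.filter_map, Multiset.card_map]
    congr 1
    refine Multiset.filter_congr fun c hc ↦ ?_
    rw [Function.comp_apply, Complex.neg_im, neg_pos, not_lt,
      (im_ne_zero_of_mem_nthRoots hν hc).le_iff_lt]
  have hcard_add := congrArg Multiset.card (Multiset.filter_add_not (0 < ·.im) s)
  rw [Multiset.card_add, hs, card_nthRoots_of_isAlgClosed, ← hs] at hcard_add
  have hcard_upper : (s.filter (0 < ·.im)).card = k := by lia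
  have hcard_lower : (s.filter (¬ 0 < ·.im)).card = k := by lia
  rw [← Multiset.filter_add_not (0 < ·.im) s, Multiset.map_add, Multiset.sum_add,
    Multiset.map_congr rfl fun c hc ↦ ha c (Multiset.mem_filter.1 hc).2,
    Multiset.map_congr rfl fun c hc ↦ hb c (hlower c hc), Multiset.map_const', Multiset.map_const',
    Multiset.sum_replicate, Multiset.sum_replicate, hcard_upper, hcard_lower, smul_add]

end Roots

section Polynomial

open Polynomial

variable {V : Type*} [NormedAddCommGroup V] [InnerProductSpace ℂ V]

/-- The product `(S - c₁) ⋯ (S - cₙ)` over a list of complex numbers, on the natural domain of an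
iterated product. -/
def pshiftProd (S : V →ₗ.[ℂ] V) : List ℂ → (V →ₗ.[ℂ] V)
  | [] => pid V
  | c :: l => pcomp (pshift S c) (pshiftProd S l)

section Extension

variable {S : V →ₗ.[ℂ] V} {T : V →ₗ[ℂ] V}

theorem mem_graph_iff_of_extends (hT : ∀ x : S.domain, S x = T x) {x y : V} :
    (x, y) ∈ S.graph ↔ x ∈ S.domain ∧ y = T x := by
  rw [LinearPMap.mem_graph_iff]
  constructor
  · rintro ⟨x, rfl, rfl⟩
    exact ⟨x.2, hT x⟩
  · rintro ⟨hx, rfl⟩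
    exact ⟨⟨x, hx⟩, rfl, hT _⟩

variable (hT : ∀ x : S.domain, S x = T x)
include hT

theorem mem_graph_pmapPow_iff_of_extends {n : ℕ} {x y : V} :
    (x, y) ∈ (pmapPow S n).graph ↔ x ∈ (pmapPow S n).domain ∧ y = (T ^ n) x := by
  have hval : ∀ {y}, (x, y) ∈ (pmapPow S n).graph → y = (T ^ n) x := by
    induction n with
    | zero => exact mem_graph_pid.1
    | succ n ih =>
      intro z hz
      rw [pmapPow_succ, mem_graph_pcomp] at hz
      obtain ⟨y, hxy, hyz⟩ := hz
      rw [((mem_graph_iff_of_extends hT).1 hyz).2, ih hxy, pow_succ', Module.End.mul_apply]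
  refine ⟨fun h ↦ ⟨LinearPMap.mem_domain_of_mem_graph h, hval h⟩, fun ⟨hx, hy⟩ ↦ ?_⟩
  obtain ⟨z, hz⟩ := LinearPMap.mem_domain_iff.1 hx
  rwa [hy, ← hval hz]

theorem mem_domain_pmapPow_succ_iff_of_extends {n : ℕ} {x : V} :
    x ∈ (pmapPow S (n + 1)).domain ↔ x ∈ (pmapPow S n).domain ∧ (T ^ n) x ∈ S.domain := by
  rw [LinearPMap.mem_domain_iff, pmapPow_succ]
  simp only [mem_graph_pcomp, mem_graph_pmapPow_iff_of_extends hT, mem_graph_iff_of_extends hT]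
  constructor
  · rintro ⟨z, y, ⟨hx, rfl⟩, hy, -⟩
    exact ⟨hx, hy⟩
  · rintro ⟨hx, hy⟩
    exact ⟨_, _, ⟨hx, rfl⟩, hy, rfl⟩

theorem aeval_mem_domain_iff_of_monic {p : ℂ[X]} (hp : p.Monic) {x : V}
    (hx : x ∈ (pmapPow S p.natDegree).domain) :
    aeval T p x ∈ S.domain ↔ (T ^ p.natDegree) x ∈ S.domain := by
  have hlower : ∀ j < p.natDegree, (T ^ j) x ∈ S.domain := fun j hj ↦
    ((mem_domain_pmapPow_succ_iff_of_extends hT).1 (domain_pmapPow_anti S hj hx)).2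
  have heval : aeval T p x = (T ^ p.natDegree) x +
      ∑ j ∈ Finset.range p.natDegree, p.coeff j • (T ^ j) x := by
    conv_lhs => rw [hp.as_sum]
    simp [Module.algebraMap_end_apply]
  rw [heval, Submodule.add_mem_iff_left]
  exact sum_mem fun j hj ↦ S.domain.smul_mem _ (hlower j (Finset.mem_range.1 hj))

theorem mem_graph_pshiftProd_iff_of_extends (l : List ℂ) {x y : V} :
    (x, y) ∈ (pshiftProd S l).graph ↔ x ∈ (pmapPow S l.length).domain ∧
      y = aeval T ((l : Multiset ℂ).map fun c ↦ X - C c).prod x := by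
  induction l generalizing y with
  | nil =>
    rw [pshiftProd, mem_graph_pid, Multiset.coe_nil, Multiset.map_zero, Multiset.prod_zero,
      map_one, Module.End.one_apply]
    exact (and_iff_right trivial).symm
  | cons c l ih =>
    rw [← Multiset.cons_coe, Multiset.map_cons, Multiset.prod_cons, pshiftProd, mem_graph_pcomp]
    set p := ((l : Multiset ℂ).map fun c ↦ X - C c).prod
    have hdom (hx : x ∈ (pmapPow S l.length).domain) :
        aeval T p x ∈ S.domain ↔ (T ^ l.length) x ∈ S.domain := by
      have hdeg : p.natDegree = l.length := natDegree_multiset_prod_X_sub_C_eq_card _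
      rw [← hdeg] at hx ⊢
      exact aeval_mem_domain_iff_of_monic hT (monic_multisetProd_X_sub_C _) hx
    have hval : y = aeval T ((X - C c) * p) x ↔ y + c • aeval T p x = T (aeval T p x) := by
      rw [map_mul, Module.End.mul_apply, map_sub, aeval_X, aeval_C, LinearMap.sub_apply,
        Module.algebraMap_end_apply, eq_sub_iff_add_eq]
    simp only [ih, mem_graph_pshift, mem_graph_iff_of_extends hT, List.length_cons,
      mem_domain_pmapPow_succ_iff_of_extends hT, hval]
    constructor
    · rintro ⟨_, ⟨hx, rfl⟩, hpx, hy⟩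
      exact ⟨⟨hx, (hdom hx).1 hpx⟩, hy⟩
    · rintro ⟨⟨hx, hTx⟩, hy⟩
      exact ⟨_, ⟨hx, rfl⟩, (hdom hx).2 hTx, hy⟩

end Extension

variable (S : V →ₗ.[ℂ] V)

theorem exists_linearMap_extends : ∃ T : V →ₗ[ℂ] V, ∀ x : S.domain, S x = T x := by
  obtain ⟨T, hT⟩ := LinearMap.exists_extend S.toFun
  exact ⟨T, fun x ↦ (LinearMap.congr_fun hT x).symm⟩

theorem domain_pshiftProd (l : List ℂ) :
    (pshiftProd S l).domain = (pmapPow S l.length).domain := by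
  obtain ⟨T, hT⟩ := exists_linearMap_extends S
  ext x
  rw [LinearPMap.mem_domain_iff]
  simp only [mem_graph_pshiftProd_iff_of_extends hT, exists_and_left, exists_eq, and_true]

theorem pshiftProd_perm {l l' : List ℂ} (h : l.Perm l') : pshiftProd S l = pshiftProd S l' := by
  obtain ⟨T, hT⟩ := exists_linearMap_extends S
  apply LinearPMap.eq_of_eq_graph
  ext ⟨x, y⟩
  rw [mem_graph_pshiftProd_iff_of_extends hT, mem_graph_pshiftProd_iff_of_extends hT,
    h.length_eq, Multiset.coe_eq_coe.2 h]

theorem pshiftProd_nthRoots {n : ℕ} (hn : n ≠ 0) (ν : ℂ) :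
    pshiftProd S (nthRoots n ν).toList = pshift (pmapPow S n) ν := by
  obtain ⟨T, hT⟩ := exists_linearMap_extends S
  have hprod : ((nthRoots n ν).map fun c ↦ X - C c).prod = X ^ n - C ν :=
    ((IsAlgClosed.splits _).eq_prod_roots_of_monic (monic_X_pow_sub_C ν hn)).symm
  apply LinearPMap.eq_of_eq_graph
  ext ⟨x, y⟩
  rw [mem_graph_pshift, mem_graph_pmapPow_iff_of_extends hT,
    mem_graph_pshiftProd_iff_of_extends hT, Multiset.coe_toList, Multiset.length_toList,
    card_nthRoots_of_isAlgClosed, hprod, map_sub, map_pow, aeval_X, aeval_C, LinearMap.sub_apply,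
    Module.algebraMap_end_apply, eq_sub_iff_add_eq]

end Polynomial

section SymmetricProduct

variable {X : Type*} [NormedAddCommGroup X] [InnerProductSpace ℂ X] {S : X →ₗ.[ℂ] X} {l : List ℂ}

theorem pshiftProd_append (l l' : List ℂ) :
    pshiftProd S (l ++ l') = pcomp (pshiftProd S l) (pshiftProd S l') := by
  induction l with
  | nil => rw [List.nil_append, pshiftProd, pid_pcomp]
  | cons c l ih => rw [List.cons_append, pshiftProd, pshiftProd, ih, pcomp_assoc]

theorem pcomp_pshift_pshiftProd_comm (c : ℂ) (l : List ℂ) :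
    pcomp (pshift S c) (pshiftProd S l) = pcomp (pshiftProd S l) (pshift S c) := by
  have hperm := pshiftProd_perm S (List.perm_append_singleton c l)
  rw [pshiftProd_append] at hperm
  simpa only [pshiftProd, pcomp_pid] using hperm.symm

theorem IsSymmP.zeroRegular_pshiftProd (hS : IsSymmP S) (hl : ∀ c ∈ l, c.im ≠ 0) :
    ZeroRegular (pshiftProd S l) := by
  induction l with
  | nil => exact zeroRegular_pid
  | cons c l ih =>
    rw [List.forall_mem_cons] at hl
    exact zeroRegular_pcomp (hS.zeroRegular_pshift hl.1) (ih hl.2)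

variable [CompleteSpace X]

theorem IsSymmP.isClosed_pshiftProd (hS : IsSymmP S) (hcl : S.IsClosed)
    (hl : ∀ c ∈ l, c.im ≠ 0) : (pshiftProd S l).IsClosed := by
  induction l with
  | nil => exact isClosed_pid
  | cons c l ih =>
    rw [List.forall_mem_cons] at hl
    exact (hS.zeroRegular_pshift hl.1).isClosed_pcomp (isClosed_pshift_iff.2 hcl) (ih hl.2)

theorem IsSymmP.rangeCodim_pshiftProd (hS : IsSymmP S) (hd : Dense (S.domain : Set X))
    (hcl : S.IsClosed) (hl : ∀ c ∈ l, c.im ≠ 0) :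
    rangeCodim (pshiftProd S l) =
      ((l : Multiset ℂ).map fun c ↦ rangeCodim (pshift S c)).sum := by
  induction l with
  | nil => exact rangeCodim_pid
  | cons c l ih =>
    rw [List.forall_mem_cons] at hl
    have hreg := hS.zeroRegular_pshiftProd hl.2
    rw [← Multiset.cons_coe, Multiset.map_cons, Multiset.sum_cons, ← ih hl.2]
    exact rangeCodim_pcomp_of_comm hreg.injective (hS.zeroRegular_pshift hl.1).injective
      (pcomp_pshift_pshiftProd_comm c l) hd (hreg.isClosed_range (hS.isClosed_pshiftProd hcl hl.2))

theorem IsSymmP.dense_domain_pmapPow (hS : IsSymmP S) (hd : Dense (S.domain : Set X))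
    (hcl : S.IsClosed) {c : ℂ} (hc : c.im ≠ 0) (hfin : rangeCodim (pshift S c) < ℵ₀) (n : ℕ) :
    Dense ((pmapPow S n).domain : Set X) := by
  have : FiniteDimensional ℂ (X ⧸ LinearMap.range (pshift S c).toFun) :=
    Module.rank_lt_aleph0_iff.1 hfin
  have hdomain (n : ℕ) :
      (pmapPow S n).domain = (pshiftProd S (List.replicate n c)).domain := by
    rw [domain_pshiftProd, List.length_replicate]
  rw [hdomain]
  induction n with
  | zero => exact dense_univ
  | succ n ih =>
    rw [List.replicate_succ, pshiftProd, pcomp_pshift_pshiftProd_comm]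
    exact (hS.zeroRegular_pshift hc).dense_domain_pcomp hd (hS.isClosed_range_pshift hcl hc) ih

theorem IsSymmP.isClosed_pmapPow (hS : IsSymmP S) (hcl : S.IsClosed) :
    ∀ n, (pmapPow S n).IsClosed
  | 0 => isClosed_pid
  | n + 1 => by
    rw [← isClosed_pshift_iff (c := Complex.I), ← pshiftProd_nthRoots S n.succ_ne_zero]
    refine hS.isClosed_pshiftProd hcl fun c hc ↦ ?_
    exact im_ne_zero_of_mem_nthRoots (by simp) (Multiset.mem_toList.1 hc)

theorem IsSymmP.rangeCodim_pshift_pmapPow (hS : IsSymmP S) (hd : Dense (S.domain : Set X))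
    (hcl : S.IsClosed) {n : ℕ} (hn : n ≠ 0) {ν : ℂ} (hν : ν.im ≠ 0) :
    rangeCodim (pshift (pmapPow S n) ν) =
      ((Polynomial.nthRoots n ν).map fun c ↦ rangeCodim (pshift S c)).sum := by
  have hl : ∀ c ∈ (Polynomial.nthRoots n ν).toList, c.im ≠ 0 := fun c hc ↦
    im_ne_zero_of_mem_nthRoots hν (Multiset.mem_toList.1 hc)
  rw [← pshiftProd_nthRoots S hn, hS.rangeCodim_pshiftProd hd hcl hl, Multiset.coe_toList]

theorem IsSymmP.rangeCodim_pshift_pmapPow_two_mul (hS : IsSymmP S)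
    (hd : Dense (S.domain : Set X)) (hcl : S.IsClosed) {k : ℕ} (hk : k ≠ 0) {ν : ℂ}
    (hν : ν.im ≠ 0) :
    rangeCodim (pshift (pmapPow S (2 * k)) ν) =
      k * (rangeCodim (pshift S (-Complex.I)) + rangeCodim (pshift S Complex.I)) := by
  rw [hS.rangeCodim_pshift_pmapPow hd hcl (mul_ne_zero two_ne_zero hk) hν, ← nsmul_eq_mul,
    add_comm]
  exact sum_map_nthRoots_two_mul
    (fun c hc ↦ hS.rangeCodim_pshift_eq hcl (by simpa using hc))
    (fun c hc ↦ hS.rangeCodim_pshift_eq hcl (by simpa using hc)) hk hν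

end SymmetricProduct

section Deficiency

variable {X : Type*} [NormedAddCommGroup X] [InnerProductSpace ℂ X] [CompleteSpace X]
  {A : X →ₗ.[ℂ] X}

theorem map_subtype_kerAt_adjoint (hA : Dense (A.domain : Set X)) (μ : ℂ) :
    (kerAt A.adjoint μ).map A.adjoint.domain.subtype =
      (LinearMap.range (pshift A (starRingEnd ℂ μ)).toFun)ᗮ := by
  have horth (y : X) : y ∈ (LinearMap.range (pshift A (starRingEnd ℂ μ)).toFun)ᗮ ↔
      ∀ x : A.domain, ⟪μ • y, (x : X)⟫_ℂ = ⟪y, A x⟫_ℂ := by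
    have hshift (x : A.domain) : ⟪y, pshift A (starRingEnd ℂ μ) x⟫_ℂ = 0 ↔
        ⟪μ • y, (x : X)⟫_ℂ = ⟪y, A x⟫_ℂ := by
      change ⟪y, A x - starRingEnd ℂ μ • (x : X)⟫_ℂ = 0 ↔ _
      rw [inner_sub_right, inner_smul_right, inner_smul_left, sub_eq_zero, eq_comm]
    rw [Submodule.mem_orthogonal']
    exact Set.forall_mem_range.trans (forall_congr' hshift)
  ext y
  rw [horth, Submodule.mem_map]
  constructor
  · rintro ⟨y, hy, rfl⟩ x
    have hy' : A.adjoint y = μ • (y : X) := sub_eq_zero.1 hy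
    exact hy' ▸ LinearPMap.adjoint_isFormalAdjoint hA y x
  · intro hy
    have hmem := LinearPMap.mem_adjoint_domain_of_exists y ⟨_, hy⟩
    exact ⟨⟨y, hmem⟩, sub_eq_zero.2 (LinearPMap.adjoint_apply_eq hA ⟨y, hmem⟩ hy), rfl⟩

theorem rank_kerAt_adjoint (hA : Dense (A.domain : Set X)) (μ : ℂ)
    (hcl : IsClosed (LinearMap.range (pshift A (starRingEnd ℂ μ)).toFun : Set X)) :
    Module.rank ℂ (kerAt A.adjoint μ) = rangeCodim (pshift A (starRingEnd ℂ μ)) := by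
  set R := LinearMap.range (pshift A (starRingEnd ℂ μ)).toFun
  have : CompleteSpace R := hcl.completeSpace_coe
  calc Module.rank ℂ (kerAt A.adjoint μ)
      = Module.rank ℂ ((kerAt A.adjoint μ).map A.adjoint.domain.subtype) :=
        (Submodule.equivMapOfInjective _ (Submodule.injective_subtype _) _).rank_eq
    _ = Module.rank ℂ Rᗮ := by rw [map_subtype_kerAt_adjoint hA]
    _ = rangeCodim (pshift A (starRingEnd ℂ μ)) := (Submodule.quotientEquivOfIsCompl R Rᗮ
        R.isCompl_orthogonal).rank_eq.symm

theorem IsSymmP.nPlus_eq (hA : IsSymmP A) (hd : Dense (A.domain : Set X)) (hcl : A.IsClosed) :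
    nPlus A = rangeCodim (pshift A (-Complex.I)) := by
  rw [← Complex.conj_I]
  exact rank_kerAt_adjoint hd _ (hA.isClosed_range_pshift hcl (by simp))

theorem IsSymmP.nMinus_eq (hA : IsSymmP A) (hd : Dense (A.domain : Set X)) (hcl : A.IsClosed) :
    nMinus A = rangeCodim (pshift A Complex.I) := by
  have hconj : starRingEnd ℂ (-Complex.I) = Complex.I := by rw [map_neg, Complex.conj_I, neg_neg]
  have hrank := rank_kerAt_adjoint hd (-Complex.I) (by
    rw [hconj]; exact hA.isClosed_range_pshift hcl (by simp))
  rwa [hconj] at hrank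

end Deficiency

theorem even_powers_deficiency_finite_general (S : H →ₗ.[ℂ] H)
    (hd : Dense (S.domain : Set H)) (hc : S.IsClosed) (hsym : IsSymmP S)
    (hfin : nPlus S < ℵ₀ ∨ nMinus S < ℵ₀) (k : ℕ) (hk : 1 ≤ k) :
    Dense (((pmapPow S (2 * k)).domain : Submodule ℂ H) : Set H) ∧
    IsSymmP (pmapPow S (2 * k)) ∧ (pmapPow S (2 * k)).IsClosed ∧
    (∀ f : (pmapPow S (2 * k)).domain, ‖pmapPow S (2 * k) f + (f : H)‖ ≥ ‖(f : H)‖) ∧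
    nPlus (pmapPow S (2 * k)) = (k : Cardinal) * (nPlus S + nMinus S) ∧
    nMinus (pmapPow S (2 * k)) = (k : Cardinal) * (nPlus S + nMinus S) := by
  rw [hsym.nPlus_eq hd hc, hsym.nMinus_eq hd hc] at hfin ⊢
  have hk0 : k ≠ 0 := Nat.one_le_iff_ne_zero.1 hk
  have hdense : Dense ((pmapPow S (2 * k)).domain : Set H) := by
    rcases hfin with h | h
    · exact hsym.dense_domain_pmapPow hd hc (by simp) h _
    · exact hsym.dense_domain_pmapPow hd hc (by simp) h _
  have hsym' := isSymmP_pmapPow hsym (2 * k)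
  have hclosed := hsym.isClosed_pmapPow hc (2 * k)
  refine ⟨hdense, hsym', hclosed, hsym.norm_le_norm_pmapPow_two_mul_add k, ?_, ?_⟩
  · rw [hsym'.nPlus_eq hdense hclosed]
    exact hsym.rangeCodim_pshift_pmapPow_two_mul hd hc hk0 (by simp)
  · rw [hsym'.nMinus_eq hdense hclosed]
    exact hsym.rangeCodim_pshift_pmapPow_two_mul hd hc hk0 (by simp)

/-- Even powers of a densely defined, closed, symmetric operator with finite
deficiency indices: `S^{2k}` is densely defined, symmetric, closed,
`‖S^{2k} f + f‖ ≥ ‖f‖` on its domain, and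
`n₊(S^{2k}) = n₋(S^{2k}) = k (n₊(S) + n₋(S))`. -/
theorem even_powers_deficiency_finite (S : H →ₗ.[ℂ] H)
    (hd : Dense (S.domain : Set H)) (hc : S.IsClosed) (hsym : IsSymmP S)
    (hp : nPlus S < ℵ₀) (hm : nMinus S < ℵ₀) (k : ℕ) (hk : 1 ≤ k) :
    Dense (((pmapPow S (2 * k)).domain : Submodule ℂ H) : Set H) ∧
    IsSymmP (pmapPow S (2 * k)) ∧ (pmapPow S (2 * k)).IsClosed ∧
    (∀ f : (pmapPow S (2 * k)).domain, ‖pmapPow S (2 * k) f + (f : H)‖ ≥ ‖(f : H)‖) ∧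
    nPlus (pmapPow S (2 * k)) = (k : Cardinal) * (nPlus S + nMinus S) ∧
    nMinus (pmapPow S (2 * k)) = (k : Cardinal) * (nPlus S + nMinus S) := by
  exact even_powers_deficiency_finite_general S hd hc hsym (Or.inl hp) k hk
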